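/- Let V be a finite-dimensional real vector space of dimension n ≥ 1, let g be a nondegenerate symmetric bilinear form on V, and let a : V → V be a g-self-adjoint endomorphism. Let ρ ∈ ℂ be an eigenvalue of the complexification of a. Then there exists a real vector v ∈ V with g(v, v) ≠ 0 such that ((a² − 2·Re(ρ)·a + |ρ|²·id)ⁿ) v = 0; that is, the real generalized eigenspace of a associated to the conjugate pair {ρ, ρ̄} contains a vector that is non-null with respect to g. -/

import Mathlib

/-!
Put `P = a² − 2 Re(ρ) a + |ρ|²` and `n = dim V`. A complex eigenvector of `a` for `ρ` is killed by
the complexification of `P`, so `P` is not injective and `ker Pⁿ ≠ 0`. Since `Pⁿ` is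
`g`-self-adjoint, its kernel and its range are `g`-orthogonal; they are complementary because the
kernels of the powers of `P` are stationary from `n` on. Hence `g` restricts to a nondegenerate form
on `ker Pⁿ`, and by polarization a nonzero symmetric form has a non-null vector.
-/

open Module Polynomial

section SelfAdjoint

variable {R M N : Type*} [CommSemiring R] [AddCommMonoid M] [Module R M] [AddCommMonoid N]
  [Module R N] {B : M →ₗ[R] M →ₗ[R] N} {f : End R M}

lemma isSelfAdjoint_aeval (hf : B.IsSelfAdjoint f) (p : R[X]) : B.IsSelfAdjoint (aeval f p) := by
  induction p using Polynomial.induction_on with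
  | C r =>
    intro x y
    simp only [aeval_C, algebraMap_end_apply, map_smul, LinearMap.smul_apply]
  | add p q hp hq => rw [map_add]; exact hp.add hq
  | monomial n r h =>
    rw [pow_succ, ← mul_assoc, map_mul, aeval_X]
    have hcomm : Commute (aeval f (C r * X ^ n)) f := by
      simpa only [aeval_X] using (Commute.all (C r * X ^ n) X).map (aeval (R := R) f)
    intro x y
    rw [End.mul_apply, h, hf, ← End.mul_apply, hcomm.eq]

lemma apply_eq_zero_of_mem_ker_of_mem_range (hf : B.IsSelfAdjoint f) {x y : M}
    (hx : x ∈ LinearMap.ker f) (hy : y ∈ LinearMap.range f) : B x y = 0 := by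
  obtain ⟨z, rfl⟩ := hy
  rw [← hf x z, LinearMap.mem_ker.1 hx, map_zero, LinearMap.zero_apply]

end SelfAdjoint

lemma exists_mem_apply_self_ne_zero_of_codisjoint {R M : Type*} [CommRing R] [Invertible (2 : R)]
    [AddCommGroup M] [Module R M] {B : LinearMap.BilinForm R M} (hsymm : B.IsSymm)
    (hsep : B.SeparatingLeft) {U W : Submodule R M} (hUW : Codisjoint U W)
    (horth : ∀ x ∈ U, ∀ y ∈ W, B x y = 0) (hU : U ≠ ⊥) : ∃ v ∈ U, B v v ≠ 0 := by
  have hker : LinearMap.ker (B.restrict U) = ⊥ := by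
    rw [LinearMap.BilinForm.ker_restrict_eq_of_codisjoint hUW horth,
      LinearMap.separatingLeft_iff_ker_eq_bot.1 hsep, Submodule.comap_bot, Submodule.ker_subtype]
  have : Nontrivial U := Submodule.nontrivial_iff_ne_bot.2 hU
  have hne : B.restrict U ≠ 0 := (LinearMap.separatingLeft_iff_ker_eq_bot.2 hker).ne_zero
  obtain ⟨v, hv⟩ := LinearMap.BilinForm.exists_bilinForm_self_ne_zero hne
    (LinearMap.BilinForm.isSymm_iff.1 (hsymm.restrict U))
  exact ⟨v, v.2, hv⟩

lemma isCompl_ker_pow_finrank_range_pow_finrank {K V : Type*} [Field K] [AddCommGroup V]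
    [Module K V] [FiniteDimensional K V] (f : End K V) :
    IsCompl (LinearMap.ker (f ^ finrank K V)) (LinearMap.range (f ^ finrank K V)) := by
  have hdim := (f ^ finrank K V).finrank_range_add_finrank_ker
  rw [add_comm] at hdim
  rw [Submodule.isCompl_iff_disjoint _ _ hdim.ge, Submodule.disjoint_def]
  rintro _ hx ⟨y, rfl⟩
  have hy : y ∈ LinearMap.ker (f ^ (finrank K V + finrank K V)) := by
    rw [pow_add]
    exact hx
  rwa [End.ker_pow_eq_ker_pow_finrank_of_le (Nat.le_add_right _ _)] at hy

lemma ker_aeval_ne_bot_of_hasEigenvalue_baseChange {R S M : Type*} [CommRing R] [CommRing S]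
    [Algebra R S] [Module.Flat R S] [AddCommGroup M] [Module R M] {f : End R M} {μ : S}
    (hμ : End.HasEigenvalue (f.baseChange S) μ) {p : R[X]} (hp : aeval μ p = 0) :
    LinearMap.ker (aeval f p) ≠ ⊥ := by
  intro hker
  obtain ⟨x, hx⟩ := hμ.exists_hasEigenvector
  have hinj : Function.Injective ((aeval f p).baseChange S) :=
    Module.Flat.lTensor_preserves_injective_linearMap _ (LinearMap.ker_eq_bot.1 hker)
  have hpx : (aeval f p).baseChange S x = 0 :=
    calc (aeval f p).baseChange S x
        = aeval (f.baseChange S) p x :=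
          LinearMap.congr_fun (aeval_algHom_apply (End.baseChangeHom R S M) f p).symm x
      _ = aeval (f.baseChange S) (p.map (algebraMap R S)) x := by rw [aeval_map_algebraMap]
      _ = aeval μ p • x := by rw [End.aeval_apply_of_hasEigenvector hx, eval_map_algebraMap]
      _ = 0 := by rw [hp, zero_smul]
  exact hx.2 (hinj (hpx.trans (map_zero _).symm))

section ConjPairPolynomial

/-- The real form of `(X − ρ)(X − ρ̄)`, the monic real quadratic annihilating `ρ`. It is `(X − ρ)²`
rather than the minimal polynomial when `ρ` is real. -/
noncomputable def conjPairPolynomial (ρ : ℂ) : ℝ[X] :=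
  X ^ 2 - C (2 * ρ.re) * X + C (Complex.normSq ρ)

lemma map_conjPairPolynomial (ρ : ℂ) :
    (conjPairPolynomial ρ).map (algebraMap ℝ ℂ) = (X - C ρ) * (X - C (starRingEnd ℂ ρ)) := by
  have htrace : ((2 * ρ.re : ℝ) : ℂ) = ρ + starRingEnd ℂ ρ := (Complex.add_conj ρ).symm
  have hnorm : (Complex.normSq ρ : ℂ) = ρ * starRingEnd ℂ ρ := (Complex.mul_conj ρ).symm
  simp only [conjPairPolynomial, Polynomial.map_add, Polynomial.map_sub, Polynomial.map_mul,
    Polynomial.map_pow, map_X, map_C, Complex.coe_algebraMap]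
  rw [htrace, hnorm, C_add, C_mul]
  ring

lemma aeval_self_conjPairPolynomial (ρ : ℂ) : aeval ρ (conjPairPolynomial ρ) = 0 := by
  rw [← eval_map_algebraMap, map_conjPairPolynomial, eval_mul, eval_sub, eval_X, eval_C, sub_self,
    zero_mul]

lemma aeval_conjPairPolynomial {A : Type*} [Ring A] [Algebra ℝ A] (a : A) (ρ : ℂ) :
    aeval a (conjPairPolynomial ρ) = a * a - (2 * ρ.re) • a + Complex.normSq ρ • (1 : A) := by
  simp only [conjPairPolynomial, map_add, map_sub, map_mul, aeval_X, aeval_C, sq,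
    Algebra.smul_def, mul_one]

end ConjPairPolynomial

theorem stmt_4_general {K L V : Type*} [Field K] [Invertible (2 : K)] [CommRing L] [Algebra K L]
    [AddCommGroup V] [Module K V] [FiniteDimensional K V] {B : LinearMap.BilinForm K V}
    (hsymm : B.IsSymm) (hsep : B.SeparatingLeft) {f : End K V} (hf : B.IsSelfAdjoint f) {μ : L}
    (hμ : End.HasEigenvalue (f.baseChange L) μ) {p : K[X]} (hp : aeval μ p = 0) :
    ∃ v : V, B v v ≠ 0 ∧ (aeval f p ^ finrank K V) v = 0 := by
  set n := finrank K V
  have hpow : B.IsSelfAdjoint ⇑(aeval f p ^ n) := by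
    rw [← map_pow]
    exact isSelfAdjoint_aeval hf (p ^ n)
  have hker : LinearMap.ker (aeval f p ^ n) ≠ ⊥ :=
    ne_bot_of_le_ne_bot (ker_aeval_ne_bot_of_hasEigenvalue_baseChange hμ hp)
      (by simpa only [pow_one] using End.ker_pow_le_ker_pow_finrank (aeval f p) 1)
  obtain ⟨v, hv, hvv⟩ := exists_mem_apply_self_ne_zero_of_codisjoint hsymm hsep
    (isCompl_ker_pow_finrank_range_pow_finrank (aeval f p)).codisjoint
    (fun _ hx _ hy => apply_eq_zero_of_mem_ker_of_mem_range hpow hx hy) hker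
  exact ⟨v, hvv, hv⟩

/-- For a `g`-self-adjoint endomorphism `a` of a real vector space with nondegenerate
symmetric bilinear form `g`, the real generalized eigenspace associated to a conjugate
pair of complex eigenvalues `{ρ, ρ̄}` contains a non-null vector. -/
theorem stmt_4 {V : Type*} [AddCommGroup V] [Module ℝ V] [FiniteDimensional ℝ V]
    (hn : 1 ≤ Module.finrank ℝ V)
    (g : V →ₗ[ℝ] V →ₗ[ℝ] ℝ) (hgsymm : ∀ u w, g u w = g w u)
    (hgnd : ∀ v : V, (∀ w, g v w = 0) → v = 0)
    (a : V →ₗ[ℝ] V) (hsa : ∀ u w, g (a u) w = g u (a w))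
    (ρ : ℂ) (hρ : Module.End.HasEigenvalue (a.baseChange ℂ) ρ) :
    ∃ v : V, g v v ≠ 0 ∧
      ((a * a - (2 * ρ.re) • a + Complex.normSq ρ • (LinearMap.id : V →ₗ[ℝ] V))
        ^ (Module.finrank ℝ V)) v = 0 := by
  rw [← End.one_eq_id, ← aeval_conjPairPolynomial]
  exact stmt_4_general ⟨hgsymm⟩ hgnd hsa hρ (aeval_self_conjPairPolynomial ρ)
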